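/- Let (A, +, ∘) be a strongly nilpotent ℚ-brace, and for a, b ∈ A let a·b denote the derived product (the weak limit of 2^n·(((1/2^n)·a)*b)). Then for all α, γ ∈ ℚ and all a, b, c ∈ A: (α·a + γ·b)·c = α·(a·c) + γ·(b·c) and a·(α·b + γ·c) = α·(a·b) + γ·(a·c). -/

import Mathlib

/-!
Along the dyadic scalars `2⁻ⁿ` every expression built from the brace operations is a polynomial in
`2⁻ⁿ`. Writing `E(u, v; c) = (u + v) * c - u * c - v * c`, the brace identity
`(u ∘ v) * c = u * (v * c) + u * c + v * c` gives
`E(u, v; c) = u * (v * c) - (u * v) * c - E(u + v, u * v; c)` (`defect_rec`), and strong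
nilpotency makes this recursion terminate. It suggests that `E` is "quadratic": if `u` and `v`
carry a factor `2⁻ⁿ`, then `E` should carry a factor `4⁻ⁿ`, so that `2ⁿ E → 0`, which is
additivity of the derived product in its first argument. Additive maps of `ℚ`-vector spaces are
`ℚ`-linear, and linearity in the second argument is inherited from `*`.

To make this precise, `B.polySeq s d w` is the group of sequences `n ↦ ∑ᵢ 2^(-n i) aᵢ` with
`i ≥ d` and `aᵢ ∈ A^[w+1]`, up to arbitrary sequences in `A^[s+1]`. The central claim
(`star_mem_polySeq`) is that `*` is multiplicative for these filtrations, and in fact improves the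
precision `s` to `s + 1`. It is proved by induction on `s`, and for fixed `s` by downward induction
on the total weight: all terms of the recursion for `E` have larger weight, so `*` is additive in
its first argument up to known terms, and this reduces everything to `F(n) = (2⁻ⁿ a) * c`. There
`F(n) - 2 F(n+1) = E(2⁻⁽ⁿ⁺¹⁾ a, 2⁻⁽ⁿ⁺¹⁾ a; c)` is already known to be a polynomial without
constant and linear term, and solving this difference equation (`mem_polySeq_of_doubling`) shows
that `F` is a polynomial without constant term.
-/

open Filter Topology

/-- A left brace: an abelian group `(A, +)` together with a group operation `∘`
satisfying `a ∘ (b + c) + a = a ∘ b + a ∘ c`. -/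
structure LeftBrace (A : Type*) [AddCommGroup A] where
  circ : A → A → A
  one : A
  inv : A → A
  circ_assoc : ∀ a b c : A, circ (circ a b) c = circ a (circ b c)
  one_circ : ∀ a : A, circ one a = a
  circ_one : ∀ a : A, circ a one = a
  inv_circ : ∀ a : A, circ (inv a) a = one
  left_dist : ∀ a b c : A, circ a (b + c) + a = circ a b + circ a c

/-- `a * b = a ∘ b - a - b`. -/
def LeftBrace.star {A : Type*} [AddCommGroup A] (B : LeftBrace A) (a b : A) : A :=
  B.circ a b - a - b

/-- The strong radical chain: `strongChain B m` is `A^[m+1]`; `A^[1] = A` and for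
`i > 1`, `A^[i]` is the additive subgroup generated by all `a * b` with
`a ∈ A^[j]`, `b ∈ A^[i-j]`, `0 < j < i`. (Inside the binder `j ≤ m` we have
`min j m = j`, so the generating set below is exactly the intended one.) -/
def LeftBrace.strongChain {A : Type*} [AddCommGroup A] (B : LeftBrace A) : ℕ → AddSubgroup A
  | 0 => ⊤
  | (m+1) => AddSubgroup.closure
      {x : A | ∃ j ≤ m, ∃ u ∈ LeftBrace.strongChain B (min j m),
        ∃ v ∈ LeftBrace.strongChain B (m - j), x = B.star u v}
termination_by n => n
decreasing_by
  · exact Nat.lt_succ_of_le (Nat.min_le_right j m)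
  · exact Nat.lt_succ_of_le (Nat.sub_le m j)

/-- A brace is strongly nilpotent if `A^[n] = 0` for some `n`. -/
def LeftBrace.StronglyNilpotent {A : Type*} [AddCommGroup A] (B : LeftBrace A) : Prop :=
  ∃ n : ℕ, B.strongChain n = ⊥

/-- A ℚ-brace: the additive group is a ℚ-vector space and `a * (e • b) = e • (a * b)`. -/
def LeftBrace.IsQBrace {A : Type*} [AddCommGroup A] [Module ℚ A] (B : LeftBrace A) : Prop :=
  ∀ (e : ℚ) (a b : A), B.star a (e • b) = e • B.star a b

/-- `mul` is the derived product of the brace `B`: `mul a b` is the weak limit of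
`2^n • (((1/2^n) • a) * b)`. -/
def LeftBrace.IsDerivedMul {A : Type*} [AddCommGroup A] [Module ℚ A] (B : LeftBrace A)
    (mul : A → A → A) : Prop :=
  ∀ a b : A, ∀ φ : A →ₗ[ℚ] ℚ,
    Tendsto (fun n : ℕ =>
        ((φ ((2 ^ n : ℚ) • B.star (((1 : ℚ) / 2 ^ n) • a) b) : ℚ) : ℝ))
      atTop (𝓝 ((φ (mul a b) : ℚ) : ℝ))

namespace LeftBrace

variable {A : Type*} [AddCommGroup A]

/-! ### Identities in a left brace -/

lemma circ_eq (B : LeftBrace A) (a b : A) : B.circ a b = B.star a b + a + b := by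
  simp only [star]; abel

lemma star_add (B : LeftBrace A) (a b c : A) :
    B.star a (b + c) = B.star a b + B.star a c := by
  have h := eq_sub_of_add_eq (B.left_dist a b c)
  simp only [star, h]; abel

lemma star_zero (B : LeftBrace A) (a : A) : B.star a 0 = 0 := by
  simpa using B.star_add a 0 0

lemma star_neg (B : LeftBrace A) (a b : A) : B.star a (-b) = -B.star a b := by
  have h := B.star_add a b (-b)
  rw [add_neg_cancel, star_zero] at h
  exact (neg_eq_of_add_eq_zero_right h.symm).symm

lemma one_eq_zero (B : LeftBrace A) : B.one = 0 := by
  simpa [B.one_circ] using B.left_dist B.one 0 0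

lemma zero_star (B : LeftBrace A) (a : A) : B.star 0 a = 0 := by
  have h := B.one_circ a
  rw [one_eq_zero] at h
  simp [star, h]

/-- `(u ∘ v) * c = u * (v * c) + u * c + v * c`. -/
lemma star_circ (B : LeftBrace A) (u v c : A) :
    B.star (u + v + B.star u v) c = B.star u (B.star v c) + B.star u c + B.star v c := by
  have e : u + v + B.star u v = B.circ u v := by rw [circ_eq]; abel
  have h := B.circ_assoc u v c
  rw [B.circ_eq v c, B.circ_eq u (_ + _), B.circ_eq (B.circ u v) c, star_add, star_add] at h
  rw [e, eq_sub_of_add_eq (eq_sub_of_add_eq h), B.circ_eq u v]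
  abel

/-- The defect of additivity of `*` in its first argument,
`(u + v) * c - u * c - v * c`. -/
def defect (B : LeftBrace A) (u v c : A) : A :=
  B.star (u + v) c - B.star u c - B.star v c

lemma defect_rec (B : LeftBrace A) (u v c : A) :
    B.defect u v c = B.star u (B.star v c) - B.star (B.star u v) c
      - B.defect (u + v) (B.star u v) c := by
  simp only [defect, star_circ]; abel

/-! ### The strong radical chain -/

lemma star_mem (B : LeftBrace A) {j k : ℕ} {u v : A} (hu : u ∈ B.strongChain j)
    (hv : v ∈ B.strongChain k) : B.star u v ∈ B.strongChain (j + k + 1) := by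
  rw [strongChain]
  refine AddSubgroup.subset_closure ⟨j, by omega, u, ?_, v, ?_, rfl⟩
  · rwa [min_eq_left (by omega)]
  · rwa [Nat.add_sub_cancel_left]

lemma mem_strongChain_zero (B : LeftBrace A) (a : A) : a ∈ B.strongChain 0 := by
  rw [strongChain]; trivial

lemma strongChain_succ_le (B : LeftBrace A) (m : ℕ) :
    B.strongChain (m + 1) ≤ B.strongChain m := by
  induction m using Nat.strong_induction_on with
  | _ m ih =>
    cases m with
    | zero => intro x _; exact B.mem_strongChain_zero x
    | succ m =>
      rw [strongChain, AddSubgroup.closure_le]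
      rintro _ ⟨j, hj, u, hu, v, hv, rfl⟩
      rw [min_eq_left hj] at hu
      rcases Nat.lt_or_ge m j with h | h
      · obtain rfl : j = m + 1 := by omega
        exact B.star_mem (k := 0) (ih m (by omega) hu) (B.mem_strongChain_zero v)
      · have hv' : v ∈ B.strongChain (m - j) :=
          ih (m - j) (by omega) (by rwa [show m - j + 1 = m + 1 - j by omega])
        have := B.star_mem hu hv'
        rwa [show j + (m - j) + 1 = m + 1 by omega] at this

lemma strongChain_anti (B : LeftBrace A) : Antitone B.strongChain :=
  antitone_nat_of_succ_le B.strongChain_succ_le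

lemma defect_mem (B : LeftBrace A) (hSN : B.StronglyNilpotent) {s : ℕ} (u : A) {v : A} (c : A)
    (hv : v ∈ B.strongChain s) : B.defect u v c ∈ B.strongChain (s + 1) := by
  obtain ⟨N, hN⟩ := hSN
  suffices H : ∀ t s u v, N ≤ s + t → v ∈ B.strongChain s →
      B.defect u v c ∈ B.strongChain (s + 1) from H N s u v (by omega) hv
  intro t
  induction t with
  | zero =>
    intro s u v hs hv
    have h0 := B.strongChain_anti (show N ≤ s by omega) hv
    rw [hN, AddSubgroup.mem_bot] at h0
    simp [h0, defect, zero_star, zero_mem]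
  | succ t ih =>
    intro s u v hs hv
    have huv : B.star u v ∈ B.strongChain (s + 1) := by
      have := B.star_mem (B.mem_strongChain_zero u) hv
      rwa [show 0 + s + 1 = s + 1 by omega] at this
    rw [defect_rec]
    refine sub_mem (sub_mem ?_ ?_) ?_
    · exact B.strongChain_anti (by omega)
        (B.star_mem (B.mem_strongChain_zero u) (B.star_mem hv (B.mem_strongChain_zero c)))
    · exact B.strongChain_anti (by omega) (B.star_mem huv (B.mem_strongChain_zero c))
    · exact B.strongChain_anti (by omega) (ih (s + 1) (u + v) _ (by omega) huv)

variable [Module ℚ A]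

lemma smul_mem (B : LeftBrace A) (hQ : B.IsQBrace) {m : ℕ} (q : ℚ) {a : A}
    (ha : a ∈ B.strongChain m) : q • a ∈ B.strongChain m := by
  induction m using Nat.strong_induction_on generalizing a with
  | _ m ih =>
    cases m with
    | zero => exact B.mem_strongChain_zero _
    | succ m =>
      rw [strongChain] at ha
      induction ha using AddSubgroup.closure_induction with
      | zero => simp [zero_mem]
      | add x y _ _ hx hy => rw [smul_add]; exact add_mem hx hy
      | neg x _ hx => rw [smul_neg]; exact neg_mem hx
      | mem x hx =>
        obtain ⟨j, hj, u, hu, v, hv, rfl⟩ := hx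
        rw [min_eq_left hj] at hu
        rw [← hQ]
        have := B.star_mem hu (ih (m - j) (by omega) hv)
        rwa [show j + (m - j) + 1 = m + 1 by omega] at this

/-! ### Polynomial sequences in `2⁻ⁿ` -/

/-- Sequences `n ↦ ∑ᵢ 2^(-n i) • aᵢ` (finite sum) with all `i ≥ d` and all `aᵢ ∈ A^[w+1]`, up to
arbitrary sequences with values in `A^[s+1]`. So `s` is the precision, `d` the order of vanishing
in `2⁻ⁿ` and `w` the weight of the coefficients, shifted by one as in `strongChain`. -/
def polySeq (B : LeftBrace A) (s d w : ℕ) : AddSubgroup (ℕ → A) :=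
  AddSubgroup.closure
    {f | (∃ i, d ≤ i ∧ ∃ a ∈ B.strongChain w, f = fun n => ((1 / 2 : ℚ) ^ (n * i)) • a) ∨
      ∀ n, f n ∈ B.strongChain s}

lemma monomial_mem (B : LeftBrace A) (s : ℕ) {d w i : ℕ} (hi : d ≤ i) {a : A}
    (ha : a ∈ B.strongChain w) :
    (fun n : ℕ => ((1 / 2 : ℚ) ^ (n * i)) • a) ∈ B.polySeq s d w :=
  AddSubgroup.subset_closure (Or.inl ⟨i, hi, a, ha, rfl⟩)

lemma error_mem (B : LeftBrace A) {s : ℕ} (d w : ℕ) {f : ℕ → A}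
    (hf : ∀ n, f n ∈ B.strongChain s) : f ∈ B.polySeq s d w :=
  AddSubgroup.subset_closure (Or.inr hf)

lemma polySeq_anti (B : LeftBrace A) {s d w s' d' w' : ℕ} (hs : s' ≤ s) (hd : d' ≤ d)
    (hw : w' ≤ w) {f : ℕ → A} (hf : f ∈ B.polySeq s d w) : f ∈ B.polySeq s' d' w' := by
  refine (AddSubgroup.closure_mono ?_ : B.polySeq s d w ≤ B.polySeq s' d' w') hf
  rintro f (⟨i, hi, a, ha, rfl⟩ | h)
  · exact Or.inl ⟨i, hd.trans hi, a, B.strongChain_anti hw ha, rfl⟩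
  · exact Or.inr fun n => B.strongChain_anti hs (h n)

lemma apply_mem (B : LeftBrace A) (hQ : B.IsQBrace) {s d w m : ℕ} (hs : m ≤ s) (hw : m ≤ w)
    {f : ℕ → A} (hf : f ∈ B.polySeq s d w) (n : ℕ) : f n ∈ B.strongChain m := by
  induction hf using AddSubgroup.closure_induction with
  | zero => exact zero_mem _
  | add x y _ _ hx hy => exact add_mem hx hy
  | neg x _ hx => exact neg_mem hx
  | mem x hx =>
    rcases hx with ⟨i, hi, a, ha, rfl⟩ | h
    · exact B.smul_mem hQ _ (B.strongChain_anti hw ha)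
    · exact B.strongChain_anti hs (h n)

lemma monomial_smul_mem (B : LeftBrace A) (hQ : B.IsQBrace) {s d w : ℕ} (l : ℕ)
    {f : ℕ → A} (hf : f ∈ B.polySeq s d w) :
    (fun n => ((1 / 2 : ℚ) ^ (n * l)) • f n) ∈ B.polySeq s (d + l) w := by
  induction hf using AddSubgroup.closure_induction with
  | zero => simp only [Pi.zero_apply, smul_zero]; exact zero_mem (B.polySeq s (d + l) w)
  | add x y _ _ hx hy => simp only [Pi.add_apply, smul_add]; exact add_mem hx hy
  | neg x _ hx => simp only [Pi.neg_apply, smul_neg]; exact neg_mem hx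
  | mem x hx =>
    rcases hx with ⟨i, hi, a, ha, rfl⟩ | h
    · convert B.monomial_mem s (show d + l ≤ l + i by omega) ha using 2 with n
      rw [smul_smul, ← pow_add, mul_add]
    · exact B.error_mem _ _ fun n => B.smul_mem hQ _ (h n)

/-- Substituting `2^(-n i)` for `2⁻ⁿ`. -/
lemma comp_mem (B : LeftBrace A) {s w : ℕ} (i : ℕ) {f : ℕ → A}
    (hf : f ∈ B.polySeq s 1 w) : (fun n => f (n * i)) ∈ B.polySeq s i w := by
  induction hf using AddSubgroup.closure_induction with
  | zero => exact zero_mem (B.polySeq s i w)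
  | add x y _ _ hx hy => exact add_mem hx hy
  | neg x _ hx => exact neg_mem hx
  | mem x hx =>
    rcases hx with ⟨m, hm, a, ha, rfl⟩ | h
    · simp only [mul_assoc]
      exact B.monomial_mem s (Nat.le_mul_of_pos_right i hm) ha
    · exact B.error_mem _ _ fun n => h _

/-- Solution of the difference equation `H(n) - 2 H(n+1) = G(n+1)` when `G` has no constant and no
linear term: the monomial of degree `i` has to be divided by `2^i - 2`. -/
lemma exists_doubling (B : LeftBrace A) (hQ : B.IsQBrace) {s w : ℕ} {G : ℕ → A}
    (hG : G ∈ B.polySeq s 2 w) :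
    ∃ H ∈ B.polySeq s 2 w, ∀ n, H n - (2 : ℚ) • H (n + 1) = G (n + 1) := by
  induction hG using AddSubgroup.closure_induction with
  | zero => exact ⟨0, zero_mem _, by simp⟩
  | add x y _ _ hx hy =>
    obtain ⟨H, hH, h⟩ := hx
    obtain ⟨K, hK, k⟩ := hy
    refine ⟨H + K, add_mem hH hK, fun n => ?_⟩
    simp only [Pi.add_apply, ← h, ← k]; module
  | neg x _ hx =>
    obtain ⟨H, hH, h⟩ := hx
    refine ⟨-H, neg_mem hH, fun n => ?_⟩
    simp only [Pi.neg_apply, ← h]; module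
  | mem x hx =>
    rcases hx with ⟨i, hi, a, ha, rfl⟩ | h
    · refine ⟨_, B.monomial_mem s hi (B.smul_mem hQ (1 / (2 ^ i - 2)) ha), fun n => ?_⟩
      have h2 : (2 : ℚ) ^ i - 2 ≠ 0 := by
        have : (2 : ℚ) ^ 2 ≤ 2 ^ i := pow_le_pow_right₀ (by norm_num) hi
        intro h; linarith
      simp only [smul_smul, ← sub_smul]
      congr 1
      rw [add_mul, one_mul, pow_add, one_div_pow, one_div_pow]
      field_simp
    · refine ⟨fun n => Nat.rec 0 (fun n y => (1 / 2 : ℚ) • (y - x (n + 1))) n,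
        B.error_mem _ _ fun n => ?_, fun n => ?_⟩
      · induction n with
        | zero => exact zero_mem _
        | succ n ih => exact B.smul_mem hQ _ (sub_mem ih (h _))
      · simp only [smul_smul]; norm_num

lemma mem_polySeq_of_doubling (B : LeftBrace A) (hQ : B.IsQBrace) {s w : ℕ} {F G : ℕ → A}
    (hG : G ∈ B.polySeq s 2 w) (hF : F 0 ∈ B.strongChain w)
    (h : ∀ n, F n - (2 : ℚ) • F (n + 1) = G (n + 1)) : F ∈ B.polySeq s 1 w := by
  obtain ⟨H, hH, hH'⟩ := B.exists_doubling hQ hG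
  have hL : ∀ n, F n - H n = ((1 / 2 : ℚ) ^ n) • (F 0 - H 0) := by
    intro n
    induction n with
    | zero => simp
    | succ n ih =>
      have e : F n - H n = (2 : ℚ) • (F (n + 1) - H (n + 1)) := by
        have := (h n).trans (hH' n).symm
        rw [smul_sub, sub_eq_sub_iff_add_eq_add, ← sub_eq_zero]
        rw [← sub_eq_zero] at this
        rw [← this]; abel
      rw [pow_succ', mul_smul, ← ih, e, smul_smul]; norm_num
  -- The value at `0` of an element of `polySeq` is a coefficient up to an error in `A^[s+1]`.
  have key : ∀ K ∈ B.polySeq s 2 w,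
      (fun n : ℕ => ((1 / 2 : ℚ) ^ n) • K 0) ∈ B.polySeq s 1 w := by
    intro K hK
    induction hK using AddSubgroup.closure_induction with
    | zero => simp only [Pi.zero_apply, smul_zero]; exact zero_mem (B.polySeq s 1 w)
    | add x y _ _ hx hy => simp only [Pi.add_apply, smul_add]; exact add_mem hx hy
    | neg x _ hx => simp only [Pi.neg_apply, smul_neg]; exact neg_mem hx
    | mem x hx =>
      rcases hx with ⟨i, hi, a, ha, rfl⟩ | h
      · simpa using B.monomial_mem s (le_refl 1) ha
      · exact B.error_mem _ _ fun n => B.smul_mem hQ _ (h 0)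
  have hF0 : (fun n : ℕ => ((1 / 2 : ℚ) ^ n) • F 0) ∈ B.polySeq s 1 w := by
    simpa using B.monomial_mem s (le_refl 1) hF
  have hFe : F = H + ((fun n : ℕ => ((1 / 2 : ℚ) ^ n) • F 0)
      - (fun n : ℕ => ((1 / 2 : ℚ) ^ n) • H 0)) := by
    funext n
    have := hL n
    rw [smul_sub] at this
    simp only [Pi.add_apply, Pi.sub_apply, ← this]; abel
  rw [hFe]
  exact add_mem (B.polySeq_anti le_rfl (by omega) le_rfl hH) (sub_mem hF0 (key H hH))

/-! ### Products of polynomial sequences -/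

/-- Products of sequences of precision `s` and total weight at least `w` have precision `t` and
the expected order and weight. -/
def ProdClosed (B : LeftBrace A) (s t w : ℕ) : Prop :=
  ∀ d e j k, w ≤ j + k → ∀ f ∈ B.polySeq s d j, ∀ g ∈ B.polySeq s e k,
    (fun n => B.star (f n) (g n)) ∈ B.polySeq t (d + e) (j + k + 1)

/-- The defect has the order of a triple product, and larger weight than the product of its last
two arguments. The hypothesis `h2` on weights at least `w + 1` suffices for weights at least `w`,
which drives the downward induction on the weight. -/
lemma defect_mem_polySeq (B : LeftBrace A) (hQ : B.IsQBrace) (hSN : B.StronglyNilpotent)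
    {s w : ℕ} (h1 : B.ProdClosed s s 0) (h2 : B.ProdClosed s (s + 1) (w + 1))
    {d e l j k : ℕ} (hw : w ≤ j + k) {f g h : ℕ → A} (hf : f ∈ B.polySeq s d 0)
    (hg : g ∈ B.polySeq s e j) (hh : h ∈ B.polySeq s l k) :
    (fun n => B.defect (f n) (g n) (h n)) ∈ B.polySeq (s + 1) (d + e + l) (j + k + 2) := by
  suffices H : ∀ t d e j (f g : ℕ → A), s ≤ j + t → w ≤ j + k → f ∈ B.polySeq s d 0 →
      g ∈ B.polySeq s e j →
      (fun n => B.defect (f n) (g n) (h n)) ∈ B.polySeq (s + 1) (d + e + l) (j + k + 2) from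
    H s d e j f g (by omega) hw hf hg
  intro t
  induction t with
  | zero =>
    intro d e j f g hs _ hf hg
    exact B.error_mem _ _ fun n =>
      B.defect_mem hSN _ _ (B.apply_mem hQ le_rfl (by omega) hg n)
  | succ t ih =>
    intro d e j f g hs hw hf hg
    have hfg := h1 d e 0 j (by omega) f hf g hg
    have hgh := h1 e l j k (by omega) g hg h hh
    have p1 := h2 d (e + l) 0 (j + k + 1) (by omega) f hf _ hgh
    have p2 := h2 (d + e) l (0 + j + 1) k (by omega) _ hfg h hh
    have hsum : f + g ∈ B.polySeq s (min d e) 0 :=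
      add_mem (B.polySeq_anti le_rfl (min_le_left _ _) le_rfl hf)
        (B.polySeq_anti le_rfl (min_le_right _ _) (Nat.zero_le _) hg)
    have p3 := ih (min d e) (d + e) (0 + j + 1) (f + g) _ (by omega) (by omega) hsum hfg
    have := sub_mem (sub_mem
      (B.polySeq_anti le_rfl (show d + e + l ≤ _ by omega) (show j + k + 2 ≤ _ by omega) p1)
      (B.polySeq_anti le_rfl (show d + e + l ≤ _ by omega) (show j + k + 2 ≤ _ by omega) p2))
      (B.polySeq_anti le_rfl (show d + e + l ≤ _ by omega) (show j + k + 2 ≤ _ by omega) p3)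
    convert this using 1
    funext n
    exact B.defect_rec _ _ _

/-- The sequence `(2⁻ⁿ a) * c`, by comparing its values at `n` and `n + 1`. -/
lemma scaled_star_mem (B : LeftBrace A) (hQ : B.IsQBrace) (hSN : B.StronglyNilpotent)
    {s w : ℕ} (h1 : B.ProdClosed s s 0) (h2 : B.ProdClosed s (s + 1) (w + 1))
    {j k : ℕ} (hw : w ≤ j + k) {a c : A} (ha : a ∈ B.strongChain j) (hc : c ∈ B.strongChain k) :
    (fun n : ℕ => B.star (((1 / 2 : ℚ) ^ n) • a) c) ∈ B.polySeq (s + 1) 1 (j + k + 1) := by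
  have ma : (fun n : ℕ => ((1 / 2 : ℚ) ^ n) • a) ∈ B.polySeq s 1 j := by
    simpa using B.monomial_mem s (le_refl 1) ha
  have mc : (fun _ : ℕ => c) ∈ B.polySeq s 0 k := by
    simpa using B.monomial_mem s (le_refl 0) hc
  have hE := B.defect_mem_polySeq hQ hSN h1 h2 hw
    (B.polySeq_anti le_rfl le_rfl (Nat.zero_le _) ma) ma mc
  refine B.mem_polySeq_of_doubling hQ (B.polySeq_anti le_rfl (by omega) (by omega) hE) ?_ ?_
  · simpa using B.star_mem ha hc
  · intro n
    have e : ((1 / 2 : ℚ) ^ n) • a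
        = ((1 / 2 : ℚ) ^ (n + 1)) • a + ((1 / 2 : ℚ) ^ (n + 1)) • a := by
      rw [← add_smul]; congr 1; ring
    simp only [defect, ← e, two_smul]
    abel

lemma prodClosed_step (B : LeftBrace A) (hQ : B.IsQBrace) (hSN : B.StronglyNilpotent)
    {s w : ℕ} (h1 : B.ProdClosed s s 0) (h2 : B.ProdClosed s (s + 1) (w + 1)) :
    B.ProdClosed s (s + 1) w := by
  intro d e j k hw f hf g hg
  have hdef : ∀ x ∈ B.polySeq s d j, ∀ y ∈ B.polySeq s d j,
      (fun n => B.defect (x n) (y n) (g n)) ∈ B.polySeq (s + 1) (d + e) (j + k + 1) := by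
    intro x hx y hy
    exact B.polySeq_anti le_rfl (by omega) (by omega) (B.defect_mem_polySeq hQ hSN h1 h2 hw
      (B.polySeq_anti le_rfl le_rfl (Nat.zero_le _) hx) hy hg)
  induction hf using AddSubgroup.closure_induction with
  | zero =>
    simp only [Pi.zero_apply, zero_star]
    exact zero_mem (B.polySeq (s + 1) (d + e) (j + k + 1))
  | add x y hx hy ihx ihy =>
    convert add_mem (add_mem ihx ihy) (hdef x hx y hy) using 1
    funext n
    simp only [Pi.add_apply, defect]; abel
  | neg x hx ihx =>
    convert neg_mem (add_mem ihx (hdef x hx (-x) (neg_mem hx))) using 1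
    funext n
    simp only [Pi.add_apply, Pi.neg_apply, defect, add_neg_cancel, zero_star]; abel
  | mem x hx =>
    rcases hx with ⟨i, hi, a, ha, rfl⟩ | h
    · clear hdef
      induction hg using AddSubgroup.closure_induction with
      | zero =>
        simp only [Pi.zero_apply, star_zero]
        exact zero_mem (B.polySeq (s + 1) (d + e) (j + k + 1))
      | add y z hy hz ihy ihz =>
        simp only [Pi.add_apply, star_add]
        exact add_mem ihy ihz
      | neg y hy ihy =>
        simp only [Pi.neg_apply, star_neg]
        exact neg_mem ihy
      | mem y hy =>
        rcases hy with ⟨l, hl, c, hc, rfl⟩ | hy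
        · simp only [hQ _ _ c]
          exact B.polySeq_anti le_rfl (by omega) le_rfl (B.monomial_smul_mem hQ l
            (B.comp_mem i (B.scaled_star_mem hQ hSN h1 h2 hw ha hc)))
        · refine B.error_mem _ _ fun n => ?_
          exact B.strongChain_anti (by omega) (B.star_mem (B.mem_strongChain_zero _) (hy n))
    · exact B.error_mem _ _ fun n =>
        B.star_mem (k := 0) (h n) (B.mem_strongChain_zero _)

/-- Products gain one step of precision over their factors. -/
lemma star_mem_polySeq (B : LeftBrace A) (hQ : B.IsQBrace) (hSN : B.StronglyNilpotent) (s : ℕ) :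
    B.ProdClosed s (s + 1) 0 := by
  induction s with
  | zero =>
    intro d e j k _ f _ g _
    exact B.error_mem _ _ fun n =>
      B.star_mem (B.mem_strongChain_zero _) (B.mem_strongChain_zero _)
  | succ s ih =>
    have h1 : B.ProdClosed (s + 1) (s + 1) 0 := fun d e j k hw f hf g hg =>
      ih d e j k hw f (B.polySeq_anti (by omega) le_rfl le_rfl hf) g
        (B.polySeq_anti (by omega) le_rfl le_rfl hg)
    suffices H : ∀ t w, s + 1 ≤ w + t → B.ProdClosed (s + 1) (s + 2) w from
      H (s + 1) 0 (by omega)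
    intro t
    induction t with
    | zero =>
      intro w hw d e j k hjk f hf g hg
      refine B.error_mem _ _ fun n => B.strongChain_anti ?_ (B.star_mem
        (B.apply_mem hQ (min_le_right j (s + 1)) (min_le_left _ _) hf n)
        (B.apply_mem hQ (min_le_right k (s + 1)) (min_le_left _ _) hg n))
      omega
    | succ t iht =>
      intro w hw
      exact B.prodClosed_step hQ hSN h1 (iht (w + 1) (by omega))

/-- Without error term, a polynomial in `2⁻ⁿ` of order at least two is `o(2⁻ⁿ)` weakly. -/
lemma tendsto_zero (B : LeftBrace A) {N w : ℕ} (hN : B.strongChain N = ⊥) {f : ℕ → A}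
    (hf : f ∈ B.polySeq N 2 w) (φ : A →ₗ[ℚ] ℚ) :
    Tendsto (fun n : ℕ => ((φ ((2 ^ n : ℚ) • f n) : ℚ) : ℝ)) atTop (𝓝 0) := by
  induction hf using AddSubgroup.closure_induction with
  | zero => simp
  | add x y _ _ hx hy => simpa using hx.add hy
  | neg x _ hx => simpa using hx.neg
  | mem x hx =>
    rcases hx with ⟨i, hi, a, ha, rfl⟩ | h
    · have e : ∀ n : ℕ, ((φ ((2 ^ n : ℚ) • ((1 / 2 : ℚ) ^ (n * i)) • a) : ℚ) : ℝ)
          = ((1 / 2 : ℝ) ^ (i - 1)) ^ n * (φ a : ℝ) := by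
        intro n
        obtain ⟨m, rfl⟩ : ∃ m, i = m + 1 := ⟨i - 1, by omega⟩
        have : (2 : ℝ) ^ n * (1 / 2) ^ n = 1 := by rw [← mul_pow]; norm_num
        simp only [map_smul, smul_eq_mul, Nat.add_sub_cancel]
        push_cast
        rw [mul_add, mul_one, pow_add, ← pow_mul, mul_comm m n]
        linear_combination (1 / 2 : ℝ) ^ (n * m) * (φ a : ℝ) * this
      simp only [e]
      have h1 : ((1 / 2 : ℝ) ^ (i - 1)) < 1 :=
        pow_lt_one₀ (by norm_num) (by norm_num) (by omega)
      simpa using (tendsto_pow_atTop_nhds_zero_of_lt_one (by positivity) h1).mul_const (φ a : ℝ)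
    · have h0 : ∀ n, x n = 0 := fun n => by simpa [hN] using h n
      simp [h0]

end LeftBrace

lemma eq_of_forall_functional {A : Type*} [AddCommGroup A] [Module ℚ A] {x y : A}
    (h : ∀ φ : A →ₗ[ℚ] ℚ, (φ x : ℝ) = (φ y : ℝ)) : x = y := by
  rw [← sub_eq_zero, ← Module.forall_dual_apply_eq_zero_iff ℚ]
  intro φ
  rw [map_sub, sub_eq_zero]
  exact_mod_cast h φ

theorem statement4 {A : Type*} [AddCommGroup A] [Module ℚ A] (B : LeftBrace A)
    (hQ : B.IsQBrace) (hSN : B.StronglyNilpotent)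
    (mul : A → A → A) (hmul : B.IsDerivedMul mul)
    (α γ : ℚ) (a b c : A) :
    mul (α • a + γ • b) c = α • mul a c + γ • mul b c ∧
      mul a (α • b + γ • c) = α • mul a b + γ • mul a c := by
  have hadd : ∀ x y, mul (x + y) c = mul x c + mul y c := by
    intro x y
    refine eq_of_forall_functional fun φ => ?_
    obtain ⟨N, hN⟩ := id hSN
    have hm : ∀ z : A, (fun n : ℕ => ((1 / 2 : ℚ) ^ n) • z) ∈ B.polySeq N 1 0 := fun z => by
      simpa using B.monomial_mem N (le_refl 1) (B.mem_strongChain_zero z)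
    have hc : (fun _ : ℕ => c) ∈ B.polySeq N 0 0 := by
      simpa using B.monomial_mem N (le_refl 0) (B.mem_strongChain_zero c)
    have h := B.star_mem_polySeq hQ hSN N
    have hE := B.defect_mem_polySeq hQ hSN (w := 0)
      (fun d e j k hw f hf g hg => B.polySeq_anti (by omega) le_rfl le_rfl
        (h d e j k hw f hf g hg))
      (fun d e j k _ => h d e j k (Nat.zero_le _)) (Nat.zero_le _) (hm x) (hm y) hc
    have hlim := B.tendsto_zero hN (B.polySeq_anti (by omega) (by omega) le_rfl hE) φ
    have hlim' := ((hmul (x + y) c φ).sub (hmul x c φ)).sub (hmul y c φ)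
    have := tendsto_nhds_unique hlim' (hlim.congr fun n => ?_)
    · rw [map_add]; push_cast; linarith
    · simp only [LeftBrace.defect, ← smul_add, one_div_pow, map_smul, map_sub, smul_eq_mul]
      push_cast; ring
  constructor
  · let F : A →+ A := AddMonoidHom.mk' (fun x => mul x c) hadd
    have hF : ∀ (q : ℚ) x, mul (q • x) c = q • mul x c := fun q x => map_rat_smul F q x
    rw [hadd, hF, hF]
  · refine eq_of_forall_functional fun φ => ?_
    refine tendsto_nhds_unique (hmul a (α • b + γ • c) φ) ?_
    have := ((hmul a b φ).const_mul (α : ℝ)).add ((hmul a c φ).const_mul (γ : ℝ))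
    simp only [map_add, map_smul, smul_eq_mul]
    push_cast
    refine this.congr fun n => ?_
    rw [B.star_add, hQ, hQ]
    simp only [map_add, map_smul, smul_eq_mul]
    push_cast; ring
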